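/- arXiv:1411.4732 — 2 statements merged into one kernel-verified Lean document; each statement's English description precedes it below -/
import Mathlib

section
/- Let Q, X, and Y be jointly distributed random variables on finite types with joint pmf p. If H(Q|X) = 0, then the joint pair (Q, X) conveys exactly as much mutual information about Y as X alone: I((Q,X) : Y) = I(X : Y). (Consequently, any Q feasible in the definition of I_∧ is feasible in the definition of I_α, so I_∧ ≤ I_α.) -/
open Real Finset

/- STATEMENT 4: If `H(Q|X) = 0`, then `I((Q,X) : Y) = I(X : Y)`, for jointly distributed
`(Q, X, Y)` with joint pmf `p : Q × X × Y → ℝ`. -/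

section Defs

variable {Q X Y : Type*} [Fintype Q] [Fintype X] [Fintype Y]

/-- Marginal of `(Q, X)`. -/
noncomputable def margQX (p : Q × X × Y → ℝ) (q : Q) (x : X) : ℝ :=
  ∑ y, p (q, x, y)

/-- Marginal of `(X, Y)`. -/
noncomputable def margXY (p : Q × X × Y → ℝ) (x : X) (y : Y) : ℝ :=
  ∑ q, p (q, x, y)

/-- Marginal of `X`. -/
noncomputable def margX (p : Q × X × Y → ℝ) (x : X) : ℝ :=
  ∑ q, ∑ y, p (q, x, y)

/-- Marginal of `Y`. -/
noncomputable def margY (p : Q × X × Y → ℝ) (y : Y) : ℝ :=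
  ∑ q, ∑ x, p (q, x, y)

/-- Conditional entropy `H(Q|X)`. -/
noncomputable def condEntQX (p : Q × X × Y → ℝ) : ℝ :=
  -∑ q, ∑ x, margQX p q x * logb 2 (margQX p q x / margX p x)

/-- Mutual information `I((Q,X) : Y)` between the pair `(Q, X)` and `Y`. -/
noncomputable def miQXY (p : Q × X × Y → ℝ) : ℝ :=
  ∑ q, ∑ x, ∑ y, p (q, x, y) * logb 2 (p (q, x, y) / (margQX p q x * margY p y))

/-- Mutual information `I(X : Y)`. -/
noncomputable def miXY (p : Q × X × Y → ℝ) : ℝ :=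
  ∑ x, ∑ y, margXY p x y * logb 2 (margXY p x y / (margX p x * margY p y))

end Defs

/-!
Every term of `H(Q|X)` has the same sign, so `H(Q|X) = 0` forces each `x` to put all of its mass on
a single `q`. Wherever `p (q, x, y) > 0`, the pair `(q, x)` then has the same marginal as `x`, and
`(q, x, y)` the same mass as `(x, y)`, so `I((Q,X) : Y)` and `I(X : Y)` have the same logarithms.
-/

section LogRatio

variable {b s t : ℝ}

lemma mul_logb_div_nonpos (hb : 1 < b) (hs : 0 ≤ s) (hst : s ≤ t) : s * logb b (s / t) ≤ 0 := by
  have ht : 0 ≤ t := hs.trans hst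
  exact mul_nonpos_of_nonneg_of_nonpos hs
    (logb_nonpos hb (div_nonneg hs ht) (div_le_one_of_le₀ hst ht))

lemma mul_logb_div_eq_zero_iff (hb : 1 < b) (hs : 0 ≤ s) (hst : s ≤ t) :
    s * logb b (s / t) = 0 ↔ s = 0 ∨ s = t := by
  rcases hs.eq_or_lt with rfl | hs_pos
  · simp
  have ht_pos : 0 < t := hs_pos.trans_le hst
  have hlog : logb b (s / t) = 0 ↔ s / t = 1 := by
    rw [← logb_one (b := b)]
    exact (logb_injOn_pos hb).eq_iff (div_pos hs_pos ht_pos) (Set.mem_Ioi.mpr one_pos)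
  rw [mul_eq_zero, hlog, div_eq_one_iff_eq ht_pos.ne']

end LogRatio

section Marginals

variable {Q X Y : Type*} {p : Q × X × Y → ℝ}

lemma margX_eq_sum_margXY [Fintype Q] [Fintype Y] (p : Q × X × Y → ℝ) (x : X) :
    margX p x = ∑ y, margXY p x y :=
  sum_comm

lemma margQX_nonneg [Fintype Y] (hp : ∀ a, 0 ≤ p a) (q : Q) (x : X) : 0 ≤ margQX p q x :=
  sum_nonneg fun _ _ => hp _

lemma le_margQX [Fintype Y] (hp : ∀ a, 0 ≤ p a) (q : Q) (x : X) (y : Y) :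
    p (q, x, y) ≤ margQX p q x :=
  single_le_sum (f := fun y => p (q, x, y)) (fun _ _ => hp _) (mem_univ y)

lemma le_margXY [Fintype Q] (hp : ∀ a, 0 ≤ p a) (q : Q) (x : X) (y : Y) :
    p (q, x, y) ≤ margXY p x y :=
  single_le_sum (f := fun q => p (q, x, y)) (fun _ _ => hp _) (mem_univ q)

lemma margQX_le_margX [Fintype Q] [Fintype Y] (hp : ∀ a, 0 ≤ p a) (q : Q) (x : X) :
    margQX p q x ≤ margX p x :=
  single_le_sum (f := fun q => margQX p q x) (fun q _ => margQX_nonneg hp q x) (mem_univ q)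

lemma margQX_eq_margX_iff [Fintype Q] [Fintype Y] (hp : ∀ a, 0 ≤ p a) {q : Q} {x : X} :
    margQX p q x = margX p x ↔ ∀ y, p (q, x, y) = margXY p x y := by
  rw [margX_eq_sum_margXY, margQX, sum_eq_sum_iff_of_le fun y _ => le_margXY hp q x y]
  simp only [mem_univ, forall_const]

end Marginals

section Information

variable {Q X Y : Type*} [Fintype Q] [Fintype X] [Fintype Y] {p : Q × X × Y → ℝ}

lemma condEntQX_eq_zero_iff (hp : ∀ a, 0 ≤ p a) :
    condEntQX p = 0 ↔ ∀ q x, margQX p q x = 0 ∨ margQX p q x = margX p x := by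
  have hterm (q : Q) (x : X) : margQX p q x * logb 2 (margQX p q x / margX p x) ≤ 0 :=
    mul_logb_div_nonpos one_lt_two (margQX_nonneg hp q x) (margQX_le_margX hp q x)
  rw [condEntQX, neg_eq_zero,
    sum_eq_zero_iff_of_nonpos fun q _ => sum_nonpos fun x _ => hterm q x]
  simp only [sum_eq_zero_iff_of_nonpos fun x _ => hterm _ x, mem_univ, forall_const,
    mul_logb_div_eq_zero_iff one_lt_two (margQX_nonneg hp _ _) (margQX_le_margX hp _ _)]

lemma miXY_eq_sum_joint (p : Q × X × Y → ℝ) :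
    miXY p = ∑ q, ∑ x, ∑ y,
      p (q, x, y) * logb 2 (margXY p x y / (margX p x * margY p y)) := by
  rw [sum_comm, miXY]
  refine sum_congr rfl fun x _ => ?_
  rw [sum_comm]
  exact sum_congr rfl fun y _ => sum_mul ..

end Information

theorem stmt_4 {Q X Y : Type*} [Fintype Q] [Fintype X] [Fintype Y]
    (p : Q × X × Y → ℝ)
    (hnn : ∀ a, 0 ≤ p a)
    (hsum : ∑ a, p a = 1)
    (hdet : condEntQX p = 0) :
    miQXY p = miXY p := by
  have hconc := (condEntQX_eq_zero_iff hnn).mp hdet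
  rw [miXY_eq_sum_joint, miQXY]
  refine sum_congr rfl fun q _ => sum_congr rfl fun x _ => sum_congr rfl fun y _ => ?_
  rcases hconc q x with hzero | hfull
  · have hp_zero : p (q, x, y) = 0 := ((le_margQX hnn q x y).trans_eq hzero).antisymm (hnn _)
    rw [hp_zero, zero_mul, zero_mul]
  · rw [hfull, (margQX_eq_margX_iff hnn).mp hfull y]
end

section
/- Let Q, X, and Y be jointly distributed random variables on finite types with joint pmf p, and let y be a state with p_Y(y) > 0. If the state-conditional distribution of (Q, X) given y factorizes through X, i.e. p(q,x|y) = p(q|x) * p(x|y) for all q, x (equivalently, the KL divergence D_KL( p(Q,X|y) ‖ p(Q|X)·p(X|y) ) = 0), then the specific information of Q about y is at most that of X about y: I(Q:y) ≤ I(X:y). -/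
open Real Finset

/- STATEMENT 5: If the state-conditional distribution of `(Q, X)` given `y` factorizes
through `X`, i.e. `p(q,x|y) = p(q|x) * p(x|y)` for all `q, x`, then the specific
information of `Q` about `y` is at most that of `X` about `y`. -/

section Defs

variable {Q X Y : Type*} [Fintype Q] [Fintype X] [Fintype Y]

/-- Marginal of `(Q, Y)`. -/
noncomputable def margQY (p : Q × X × Y → ℝ) (q : Q) (y : Y) : ℝ :=
  ∑ x, p (q, x, y)

/-- Marginal of `Q`. -/
noncomputable def margQ (p : Q × X × Y → ℝ) (q : Q) : ℝ :=
  ∑ x, ∑ y, p (q, x, y)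

/-- Specific information `I(Q : y)` of `Q` about the state `y`. -/
noncomputable def specInfoQ (p : Q × X × Y → ℝ) (y : Y) : ℝ :=
  ∑ q, (margQY p q y / margY p y) * logb 2 ((margQY p q y / margY p y) / margQ p q)

/-- Specific information `I(X : y)` of `X` about the state `y`. -/
noncomputable def specInfoX (p : Q × X × Y → ℝ) (y : Y) : ℝ :=
  ∑ x, (margXY p x y / margY p y) * logb 2 ((margXY p x y / margY p y) / margX p x)

end Defs

/-!
The specific informations are relative entropies: `I(Q : y) = D(p(Q|y) ‖ p(Q))` and
`I(X : y) = D(p(X|y) ‖ p(X))`. Passing from `(Q, X)` to `Q` can only decrease relative entropy,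
by the log sum inequality, so `I(Q : y) ≤ D(p(Q,X|y) ‖ p(Q,X))`. The factorization says that the
density `p(q,x|y) / p(q,x)` equals `p(x|y) / p(x)`, a function of `x` alone, so the right-hand side
is exactly `I(X : y)`.
-/

section LogSum

variable {ι : Type*} {s : Finset ι} {a m : ι → ℝ}

theorem sum_mul_log_sum_div_sum_le (ha : ∀ i ∈ s, 0 ≤ a i) (hm : ∀ i ∈ s, 0 ≤ m i)
    (ham : ∀ i ∈ s, m i = 0 → a i = 0) :
    (∑ i ∈ s, a i) * log ((∑ i ∈ s, a i) / ∑ i ∈ s, m i) ≤ ∑ i ∈ s, a i * log (a i / m i) := by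
  rcases (sum_nonneg hm).eq_or_lt' with hM | hM
  · have ha_zero : ∀ i ∈ s, a i = 0 := fun i hi ↦
      ham i hi ((sum_eq_zero_iff_of_nonneg hm).1 hM i hi)
    rw [sum_eq_zero ha_zero, zero_mul, sum_eq_zero fun i hi ↦ by rw [ha_zero i hi, zero_mul]]
  · -- Jensen's inequality for `t ↦ t log t` at the ratios `a i / m i`, weighted by `m i`.
    have jensen := convexOn_mul_log.map_centerMass_le hm hM
      (p := fun i ↦ a i / m i) fun i hi ↦ div_nonneg (ha i hi) (hm i hi)
    have mul_ratio : ∀ i ∈ s, m i * (a i / m i) = a i := fun i hi ↦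
      mul_div_cancel_of_imp' (ham i hi)
    have mean_ratio : s.centerMass m (fun i ↦ a i / m i) = (∑ i ∈ s, a i) / ∑ i ∈ s, m i := by
      simp only [centerMass, smul_eq_mul]
      rw [sum_congr rfl mul_ratio, inv_mul_eq_div]
    have mean_ratio_mul_log :
        s.centerMass m ((fun t ↦ t * log t) ∘ fun i ↦ a i / m i) =
          (∑ i ∈ s, a i * log (a i / m i)) / ∑ i ∈ s, m i := by
      simp only [centerMass, smul_eq_mul, Function.comp_apply, ← mul_assoc]
      rw [inv_mul_eq_div, sum_congr rfl]
      exact fun i hi ↦ by rw [mul_ratio i hi]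
    rwa [mean_ratio, mean_ratio_mul_log, div_mul_eq_mul_div, div_le_div_iff_of_pos_right hM]
      at jensen

theorem sum_mul_logb_sum_div_sum_le {b : ℝ} (hb : 1 < b) (ha : ∀ i ∈ s, 0 ≤ a i)
    (hm : ∀ i ∈ s, 0 ≤ m i) (ham : ∀ i ∈ s, m i = 0 → a i = 0) :
    (∑ i ∈ s, a i) * logb b ((∑ i ∈ s, a i) / ∑ i ∈ s, m i) ≤
      ∑ i ∈ s, a i * logb b (a i / m i) := by
  simp only [logb, ← mul_div_assoc, ← sum_div]
  exact div_le_div_of_nonneg_right (sum_mul_log_sum_div_sum_le ha hm ham) (log_pos hb).le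

end LogSum

/-- The relative entropy `D(a ‖ m)`, in base `b`, of two weight functions on a finite type. It is
the finite-sum, real-valued form of the Kullback-Leibler divergence, meaningful when `a` vanishes
wherever `m` does; neither weight function is required to have total mass one. -/
noncomputable def relEntropy {ι : Type*} [Fintype ι] (b : ℝ) (a m : ι → ℝ) : ℝ :=
  ∑ i, a i * logb b (a i / m i)

section RelEntropy

variable {α β : Type*} [Fintype α] [Fintype β] {b : ℝ} {a m : α × β → ℝ}

theorem relEntropy_fst_le (hb : 1 < b) (ha : ∀ i, 0 ≤ a i) (hm : ∀ i, 0 ≤ m i)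
    (ham : ∀ i, m i = 0 → a i = 0) :
    relEntropy b (fun x ↦ ∑ y, a (x, y)) (fun x ↦ ∑ y, m (x, y)) ≤ relEntropy b a m := by
  unfold relEntropy
  rw [Fintype.sum_prod_type]
  exact sum_le_sum fun x _ ↦ sum_mul_logb_sum_div_sum_le hb (fun y _ ↦ ha (x, y))
    (fun y _ ↦ hm (x, y)) fun y _ ↦ ham (x, y)

theorem relEntropy_eq_snd_of_cond_eq
    (hcond : ∀ x y, a (x, y) = m (x, y) / (∑ x', m (x', y)) * ∑ x', a (x', y)) :
    relEntropy b a m = relEntropy b (fun y ↦ ∑ x, a (x, y)) (fun y ↦ ∑ x, m (x, y)) := by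
  have mul_logb_ratio : ∀ x y, a (x, y) * logb b (a (x, y) / m (x, y)) =
      a (x, y) * logb b ((∑ x', a (x', y)) / ∑ x', m (x', y)) := by
    intro x y
    by_cases hm : m (x, y) = 0
    · have ha : a (x, y) = 0 := by rw [hcond, hm, zero_div, zero_mul]
      rw [ha, zero_mul, zero_mul]
    · congr 2
      rw [hcond x y]
      field_simp
  simp only [relEntropy, Fintype.sum_prod_type_right, mul_logb_ratio, sum_mul]

theorem relEntropy_fst_le_snd_of_cond_eq (hb : 1 < b) (ha : ∀ i, 0 ≤ a i) (hm : ∀ i, 0 ≤ m i)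
    (hcond : ∀ x y, a (x, y) = m (x, y) / (∑ x', m (x', y)) * ∑ x', a (x', y)) :
    relEntropy b (fun x ↦ ∑ y, a (x, y)) (fun x ↦ ∑ y, m (x, y)) ≤
      relEntropy b (fun y ↦ ∑ x, a (x, y)) (fun y ↦ ∑ x, m (x, y)) := by
  have ham : ∀ i, m i = 0 → a i = 0 := fun i hi ↦ by rw [hcond i.1 i.2, hi, zero_div, zero_mul]
  exact (relEntropy_fst_le hb ha hm ham).trans_eq (relEntropy_eq_snd_of_cond_eq hcond)

end RelEntropy

theorem stmt_5 {Q X Y : Type*} [Fintype Q] [Fintype X] [Fintype Y]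
    (p : Q × X × Y → ℝ)
    (hnn : ∀ a, 0 ≤ p a)
    (hsum : ∑ a, p a = 1)
    (y : Y) (hy : 0 < margY p y)
    (hfact : ∀ q x, p (q, x, y) / margY p y =
      (margQX p q x / margX p x) * (margXY p x y / margY p y)) :
    specInfoQ p y ≤ specInfoX p y := by
  let joint : Q × X → ℝ := fun i ↦ margQX p i.1 i.2
  let posterior : Q × X → ℝ := fun i ↦ p (i.1, i.2, y) / margY p y
  have joint_nonneg : ∀ i, 0 ≤ joint i := fun _ ↦ sum_nonneg fun _ _ ↦ hnn _
  have posterior_nonneg : ∀ i, 0 ≤ posterior i := fun _ ↦ div_nonneg (hnn _) hy.le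
  have posterior_fst : ∀ q, ∑ x, posterior (q, x) = margQY p q y / margY p y := fun _ ↦
    (sum_div ..).symm
  have posterior_snd : ∀ x, ∑ q, posterior (q, x) = margXY p x y / margY p y := fun _ ↦
    (sum_div ..).symm
  have data_processing := relEntropy_fst_le_snd_of_cond_eq one_lt_two posterior_nonneg joint_nonneg
    fun q x ↦ by rw [posterior_snd]; exact hfact q x
  simp only [posterior_fst, posterior_snd] at data_processing
  exact data_processing
end
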